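/- Let R be a commutative Noetherian ring, let M be an R-module with inj.dim_R(M) ≤ c, let p be a prime ideal of R, and let g ∈ R. Then the natural localization map H_p^c(M) → (H_p^c(M))_g is surjective. -/

import Mathlib

open CategoryTheory Opposite

noncomputable section

/-- `M` has injective dimension at most `n` (as `R`-module), characterized by
vanishing of `Ext^i(N, M)` for all `i > n`. -/
def injDimLE (R : Type) [CommRing R] (M : Type) [AddCommGroup M] [Module R M] (n : ℕ) : Prop :=
  ∀ (N : ModuleCat R) (i : ℕ), n < i →
    Subsingleton (((Ext R (ModuleCat R) i).obj (op N)).obj (ModuleCat.of R M))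

section
variable {R : Type} [CommRing R]

lemma smul_extMk' {A M : ModuleCat.{0} R} (P : ProjectiveResolution A) {n : ℕ} (r : R)
    (f : P.complex.X n ⟶ M) (hf : P.complex.d (n+1) n ≫ f = 0) :
    r • P.extMk f (n+1) rfl hf = P.extMk (r • f) (n+1) rfl (by simp [hf]) := by
  rw [Abelian.Ext.smul_eq_comp_mk₀, P.extMk_comp_mk₀]
  simp

lemma extMk_zero_inj {A M : ModuleCat.{0} R} (P : ProjectiveResolution A)
    (f : P.complex.X 0 ⟶ M) (hf : P.complex.d 1 0 ≫ f = 0)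
    (h : P.extMk f 1 rfl hf = 0) : f = 0 := by
  simp only [← P.extEquivCohomologyClass.apply_eq_iff_eq,
    ProjectiveResolution.extEquivCohomologyClass_extMk,
    ProjectiveResolution.extEquivCohomologyClass_zero,
    CochainComplex.HomComplex.CohomologyClass.mk_eq_zero_iff] at h
  rw [CochainComplex.HomComplex.Cocycle.toSingleMk_mem_coboundaries_iff _ _ _ _ _ 1 (by simp)] at h
  obtain ⟨g, hg⟩ := h
  have : g = 0 := (P.cochainComplex.isZero_of_isStrictlyLE 0 1 (by simp)).eq_of_src _ _
  rw [this] at hg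
  rw [← cancel_epi (P.cochainComplexXIso 0 0 rfl).hom]
  simpa using hg.symm

lemma oldExt_class {A M : ModuleCat.{0} R} (P : ProjectiveResolution A) (n : ℕ) :
    ∃ cls : (LinearMap.ker ((P.complex.linearYonedaObj R M).sc n).g.hom) →ₗ[R]
        (((Ext R (ModuleCat R) n).obj (op A)).obj M),
      Function.Surjective cls ∧
      (∀ x, cls x = 0 ↔ (∃ u, ((P.complex.linearYonedaObj R M).sc n).f.hom u = x.1)) := by
  generalize hS : (P.complex.linearYonedaObj R M).sc n = S
  have i1 : S.homology ≅ (((Ext R (ModuleCat R) n).obj (op A)).obj M) := by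
    rw [← hS]
    exact (P.isoExt (R := R) n M).symm
  let e : ((LinearMap.ker S.g.hom) ⧸ (LinearMap.range S.moduleCatToCycles)) ≃ₗ[R]
      (((Ext R (ModuleCat R) n).obj (op A)).obj M) :=
    (S.moduleCatHomologyIso.symm ≪≫ i1).toLinearEquiv
  refine ⟨e.toLinearMap ∘ₗ (LinearMap.range S.moduleCatToCycles).mkQ, ?_, ?_⟩
  · exact e.surjective.comp (Submodule.mkQ_surjective _)
  · intro x
    have h1 : (e.toLinearMap ∘ₗ (LinearMap.range S.moduleCatToCycles).mkQ) x = 0 ↔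
        x ∈ LinearMap.range S.moduleCatToCycles := by
      rw [LinearMap.comp_apply, LinearEquiv.coe_coe, LinearEquiv.map_eq_zero_iff]
      exact Submodule.Quotient.mk_eq_zero _
    rw [h1]
    constructor
    · rintro ⟨u, hu⟩
      exact ⟨u, congrArg Subtype.val hu⟩
    · rintro ⟨u, hu⟩
      exact ⟨u, Subtype.ext hu⟩

/-- In terms of a projective resolution, a cocycle has zero class in `Ext` iff it is zero in
the derived-category `Ext`. -/
lemma exists_cls {A M : ModuleCat.{0} R} (n : ℕ) :
    ∃ (Z : Submodule R ((projectiveResolution A).complex.X n ⟶ M))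
      (c₁ : Z →ₗ[R] (((Ext R (ModuleCat R) n).obj (op A)).obj M))
      (c₂ : Z →ₗ[R] Abelian.Ext A M n),
      Function.Surjective c₁ ∧ Function.Surjective c₂ ∧ ∀ z, c₁ z = 0 ↔ c₂ z = 0 := by
  let P := projectiveResolution A
  obtain ⟨c₁, hc₁, hz⟩ := oldExt_class (M := M) P n
  let Z : Submodule R (P.complex.X n ⟶ M) :=
    LinearMap.ker (Linear.leftComp R M (P.complex.d (n+1) n))
  have hker : ∀ f : P.complex.X n ⟶ M, f ∈ Z ↔
        P.complex.d (n+1) n ≫ f = 0 := fun f => Iff.rfl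
  have hker' : ∀ f : P.complex.X n ⟶ M, f ∈ Z ↔
      ((P.complex.linearYonedaObj R M).sc n).g.hom f = 0 := by
    intro f
    rw [hker]
    change _ ↔ P.complex.d ((ComplexShape.up ℕ).next n) n ≫ f = 0
    rw [CochainComplex.next]
  let q : Z →ₗ[R] (LinearMap.ker ((P.complex.linearYonedaObj R M).sc n).g.hom) :=
    { toFun := fun z => ⟨z.1, (hker' _).1 z.2⟩
      map_add' := fun _ _ => rfl
      map_smul' := fun _ _ => rfl }
  have hq : Function.Surjective q := fun y => ⟨⟨y.1, (hker' _).2 y.2⟩, rfl⟩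
  refine ⟨Z, c₁ ∘ₗ q,
    { toFun := fun z => P.extMk z.1 (n+1) rfl ((hker _).1 z.2)
      map_add' := fun x y => (P.add_extMk _ _ _ _ _ _).symm
      map_smul' := fun r x => (smul_extMk' P _ _ _).symm }, hc₁.comp hq, ?_, ?_⟩
  · intro α
    obtain ⟨f, hf, rfl⟩ := P.extMk_surjective α (n+1) rfl
    exact ⟨⟨f, (hker f).2 hf⟩, rfl⟩
  · intro z
    rw [LinearMap.comp_apply, hz]
    obtain ⟨f, hf⟩ := z
    change (∃ u : P.complex.X ((ComplexShape.up ℕ).prev n) ⟶ M,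
        P.complex.d n ((ComplexShape.up ℕ).prev n) ≫ u = f) ↔ P.extMk f (n+1) rfl ((hker _).1 hf) = 0
    cases n with
    | zero =>
      constructor
      · rintro ⟨u, hu⟩
        rw [HomologicalComplex.shape _ _ _ (by simp)] at hu
        obtain rfl : f = 0 := by simpa using hu.symm
        simp
      · intro h
        have := extMk_zero_inj P _ _ h
        refine ⟨0, ?_⟩
        simp [this]
    | succ n =>
      rw [P.extMk_eq_zero_iff _ _ _ _ n rfl]
      obtain ⟨j, hj⟩ : ∃ j, (ComplexShape.up ℕ).prev (n+1) = j := ⟨_, rfl⟩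
      obtain rfl : j = n := by simpa using hj.symm
      rw [hj]

lemma subsingleton_new {A M : ModuleCat.{0} R} (n : ℕ)
    (h : Subsingleton (((Ext R (ModuleCat R) n).obj (op A)).obj M)) :
    Subsingleton (Abelian.Ext A M n) := by
  obtain ⟨Z, c₁, c₂, -, h₂, hz⟩ := exists_cls (A := A) (M := M) n
  refine subsingleton_of_forall_eq 0 fun y => ?_
  obtain ⟨z, rfl⟩ := h₂ y
  exact (hz z).1 (Subsingleton.elim _ _)

lemma div_of_injective {A M : ModuleCat.{0} R} (c : ℕ) (g : R)
    (hv : ∀ N : ModuleCat.{0} R, Subsingleton (Abelian.Ext N M (c+1)))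
    (hg : Function.Injective (fun a : A => g • a)) (x : Abelian.Ext A M c) :
    ∃ y : Abelian.Ext A M c, g • y = x := by
  have hm : Mono (g • 𝟙 A) := by
    rw [ModuleCat.mono_iff_injective]
    exact hg
  let S : ShortComplex (ModuleCat.{0} R) := ShortComplex.mk (g • 𝟙 A) (Limits.cokernel.π (g • 𝟙 A))
    (Limits.cokernel.condition _)
  have hS : S.ShortExact := 
    { exact := S.exact_of_g_is_cokernel (Limits.cokernelIsCokernel _)
      mono_f := hm
      epi_g := by dsimp [S]; infer_instance }
  obtain ⟨y, hy⟩ := Abelian.Ext.contravariant_sequence_exact₁ hS (Y := M) x (n₁ := c+1) (by omega)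
    ((hv _).elim _ _)
  refine ⟨y, ?_⟩
  rw [← hy]
  change _ = (Abelian.Ext.mk₀ (g • 𝟙 A)).comp y _
  rw [Abelian.Ext.mk₀_smul, Abelian.Ext.smul_comp, Abelian.Ext.mk₀_id_comp]

lemma main_new {B M : ModuleCat.{0} R} [IsNoetherian R B] (c : ℕ) (g : R)
    (hv : ∀ N : ModuleCat.{0} R, Subsingleton (Abelian.Ext N M (c+1)))
    (x : Abelian.Ext B M c) :
    ∃ (y : Abelian.Ext B M c) (j : ℕ), g ^ (j+1) • y = g ^ j • x := by
  let L : B →ₗ[R] B := LinearMap.lsmul R B g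
  obtain ⟨n, hn⟩ := monotone_stabilizes_iff_noetherian.mpr inferInstance (LinearMap.iterateKer L)
  have hL : ∀ k (b : B), (L ^ k) b = g ^ k • b := by
    intro k
    induction k with
    | zero => simp
    | succ k ih => intro b; rw [pow_succ', Module.End.mul_apply, ih]; rw [pow_succ', mul_smul]; rfl
  let A : ModuleCat.{0} R := ModuleCat.of R (LinearMap.range (L ^ n))
  let ι : A ⟶ B := ModuleCat.ofHom (Submodule.subtype _)
  let π : B ⟶ A := ModuleCat.ofHom (LinearMap.rangeRestrict _)
  have hπι : π ≫ ι = g ^ n • 𝟙 B := by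
    ext b
    exact hL n b
  have hinj : Function.Injective (fun a : A => (g ^ (n+1)) • a) := by
    intro a b hab
    have key : ∀ a : A, g ^ (n+1) • a = 0 → a = 0 := by
      intro a ha
      have h1 : g ^ (n+1) • a.1 = 0 := congrArg Subtype.val ha
      obtain ⟨b, hb⟩ := a.2
      have h3 : b ∈ LinearMap.ker (L ^ (n + 1 + n)) := by
        rw [LinearMap.mem_ker, hL, pow_add, mul_smul, ← hL n, hb]
        exact h1
      have h4 : b ∈ LinearMap.ker (L ^ n) := by
        have := hn (n + 1 + n) (by omega)
        change LinearMap.ker (L ^ n) = LinearMap.ker (L ^ (n + 1 + n)) at this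
        rw [this]
        exact h3
      apply Subtype.ext
      rw [← hb]
      exact h4
    rw [← sub_eq_zero]
    apply key
    rw [smul_sub, sub_eq_zero]
    exact hab
  obtain ⟨z, hz⟩ := div_of_injective c (g^(n+1)) hv hinj 
    ((Abelian.Ext.mk₀ ι).comp x (zero_add _))
  refine ⟨(Abelian.Ext.mk₀ π).comp z (zero_add _), n, ?_⟩
  rw [← Abelian.Ext.comp_smul, hz, Abelian.Ext.mk₀_comp_mk₀_assoc, hπι,
    Abelian.Ext.mk₀_smul, Abelian.Ext.smul_comp, Abelian.Ext.mk₀_id_comp]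


lemma main_old {B M : ModuleCat.{0} R} [IsNoetherian R B] (c : ℕ) (g : R)
    (hv : ∀ N : ModuleCat.{0} R, Subsingleton (((Ext R (ModuleCat R) (c+1)).obj (op N)).obj M))
    (x : ((Ext R (ModuleCat R) c).obj (op B)).obj M) :
    ∃ (y : ((Ext R (ModuleCat R) c).obj (op B)).obj M) (j : ℕ), g ^ (j+1) • y = g ^ j • x := by
  obtain ⟨Z, c₁, c₂, h₁, h₂, hz⟩ := exists_cls (A := B) (M := M) c
  obtain ⟨x, rfl⟩ := h₁ x
  obtain ⟨y, j, hy⟩ := main_new c g (fun N => subsingleton_new _ (hv N)) (c₂ x)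
  obtain ⟨y, rfl⟩ := h₂ y
  refine ⟨c₁ y, j, ?_⟩
  rw [← sub_eq_zero, ← map_smul, ← map_smul, ← map_sub] at hy ⊢
  exact (hz _).2 hy

end

/-- `R` Noetherian, `M` an `R`-module with `inj.dim_R M ≤ c`, `p` a prime,
`g ∈ R`.  Then the natural localization map `H_p^c(M) → (H_p^c(M))_g` is surjective. -/
theorem stmt15 (R : Type) [CommRing R] [IsNoetherianRing R]
    (M : Type) [AddCommGroup M] [Module R M] (c : ℕ)
    (hinj : injDimLE R M c)
    (p : Ideal R) [p.IsPrime] (g : R) :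
    Function.Surjective
      (LocalizedModule.mkLinearMap (Submonoid.powers g)
        ((localCohomology p c).obj (ModuleCat.of R M))) := by
  have key : ∀ (h : R) (x : ((localCohomology p c).obj (ModuleCat.of R M))),
      ∃ (y : ((localCohomology p c).obj (ModuleCat.of R M))) (j : ℕ),
        h ^ (j+1) • y = h ^ j • x := by
    intro h x
    let D := localCohomology.diagram (localCohomology.idealPowersDiagram p) c
    let E := (evaluation (ModuleCat.{0} R) (ModuleCat.{0} R)).obj (ModuleCat.of R M)
    have hc : Limits.IsColimit (E.mapCocone (Limits.colimit.cocone D)) :=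
      Limits.isColimitOfPreserves E (Limits.colimit.isColimit D)
    obtain ⟨i, x, rfl⟩ := Limits.Concrete.isColimit_exists_rep _ hc x
    let B : ModuleCat.{0} R := (localCohomology.ringModIdeals
      (localCohomology.idealPowersDiagram p)).obj i.unop
    haveI : IsNoetherian R B :=
      inferInstanceAs (IsNoetherian R (R ⧸ (p ^ i.unop.unop)))
    obtain ⟨y, j, hy⟩ := main_old (B := B) (M := ModuleCat.of R M) c h
      (fun N => hinj N _ (Nat.lt_succ_self c)) x
    refine ⟨((E.mapCocone (Limits.colimit.cocone D)).ι.app i).hom y, j, ?_⟩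
    have := congrArg ((E.mapCocone (Limits.colimit.cocone D)).ι.app i).hom hy
    erw [map_smul, map_smul] at this
    exact this
  intro z
  induction z using LocalizedModule.induction_on with
  | h m s =>
    obtain ⟨s, k, rfl⟩ := s
    obtain ⟨y, j, hy⟩ := key (g ^ k) m
    refine ⟨y, ?_⟩
    rw [LocalizedModule.mkLinearMap_apply, LocalizedModule.mk_eq]
    refine ⟨⟨(g ^ k) ^ j, k * j, (pow_mul _ _ _)⟩, ?_⟩
    simp only [Submonoid.smul_def]
    rw [← mul_smul]
    simpa [pow_succ] using hy

end
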